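/- Weak unique continuation principle for Steklov eigenfunctions (Theorem 3.3, reformulated without Sobolev spaces): Let n ≥ 2 and let Ω ⊆ ℝⁿ be a nonempty, bounded, connected open set with C² boundary, i.e. there exists a C² function φ : ℝⁿ → ℝ with Ω = {x : φ(x) > 0} and ‖∇φ(x)‖ ≥ 1 for every x with φ(x) = 0. Let B ⊆ ℝⁿ be an open set with B ∩ ∂Ω ≠ ∅, where ∂Ω denotes the topological frontier of Ω. Let u : ℝⁿ → ℝ be C² on Ω with Δu = 0 on Ω, and suppose that the zero extension w : ℝⁿ → ℝ, defined by w(x) = u(x) for x ∈ Ω and w(x) = 0 for x ∉ Ω, is C¹ on the open set Ω ∪ B. Then u = 0 everywhere on Ω. -/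

import Mathlib

open Set

/-- The Laplacian of `f : ℝⁿ → ℝ`, as the sum of the pure second derivatives
(the trace of the Hessian). -/
noncomputable def laplacian {n : ℕ} (f : EuclideanSpace ℝ (Fin n) → ℝ)
    (x : EuclideanSpace ℝ (Fin n)) : ℝ :=
  ∑ i : Fin n, iteratedFDeriv ℝ 2 f x ![EuclideanSpace.single i 1, EuclideanSpace.single i 1]

section helpers
open MeasureTheory Filter Topology
open scoped ContDiff

/-- Euclidean space, abbreviated. -/
abbrev Eu (n : ℕ) := EuclideanSpace ℝ (Fin n)

section generic
variable {n : ℕ}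

/-- Multiplying by a cutoff supported in `U` globalises regularity. -/
lemma contDiff_cut {k : WithTop ℕ∞} {U : Set (Eu n)} (hU : IsOpen U) {θ f : Eu n → ℝ}
    (hθ : ContDiff ℝ k θ) (hs : tsupport θ ⊆ U) (hf : ContDiffOn ℝ k f U) :
    ContDiff ℝ k (fun x => θ x * f x) := by
  rw [contDiff_iff_contDiffAt]
  intro x
  by_cases hx : x ∈ tsupport θ
  · exact hθ.contDiffAt.mul (hf.contDiffAt (hU.mem_nhds (hs hx)))
  · have h0 : (fun x => θ x * f x) =ᶠ[𝓝 x] fun _ => 0 := by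
      filter_upwards [notMem_tsupport_iff_eventuallyEq.1 hx] with y hy
      simp [hy]
    exact contDiffAt_const.congr_of_eventuallyEq h0

lemma continuous_cut {U : Set (Eu n)} (hU : IsOpen U) {θ f : Eu n → ℝ}
    (hθ : Continuous θ) (hs : tsupport θ ⊆ U) (hf : ContinuousOn f U) :
    Continuous (fun x => θ x * f x) :=
  (contDiff_cut (k := 0) hU (contDiff_zero.2 hθ) hs (contDiffOn_zero.2 hf)).continuous

lemma integrable_cut {U : Set (Eu n)} (hU : IsOpen U) {θ f : Eu n → ℝ}
    (hθ : Continuous θ) (hc : HasCompactSupport θ) (hs : tsupport θ ⊆ U)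
    (hf : ContinuousOn f U) : Integrable (fun x => θ x * f x) :=
  (continuous_cut hU hθ hs hf).integrable_of_hasCompactSupport hc.mul_right

lemma exists_cutoff {U : Set (Eu n)} (hU : IsOpen U) {x : Eu n} {r : ℝ} (hr : 0 < r)
    (hs : Metric.closedBall x r ⊆ U) :
    ∃ (θ : Eu n → ℝ) (δ : ℝ), 0 < δ ∧ ContDiff ℝ ∞ θ ∧ tsupport θ ⊆ U ∧ HasCompactSupport θ ∧
      ∀ y ∈ Metric.closedBall x (r + δ), θ y = 1 ∧ y ∈ U := by
  obtain ⟨d, hd, hdU⟩ := (isCompact_closedBall x r).exists_cthickening_subset_open hU hs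
  rw [cthickening_closedBall hd.le hr.le] at hdU
  let c : ContDiffBump x := ⟨r + d / 2, r + d, by positivity, by linarith⟩
  refine ⟨c, d / 2, by positivity, c.contDiff, ?_, c.hasCompactSupport, ?_⟩
  · rw [c.tsupport_eq]
    simpa [c, add_comm] using hdU
  · intro y hy
    refine ⟨c.one_of_mem_closedBall hy, hdU ?_⟩
    rw [Metric.mem_closedBall] at hy ⊢
    linarith

/-- Derivative under the integral sign. -/
lemma hasDerivAt_param {f ρ : Eu n → ℝ} {c v : Eu n → Eu n} (hf : ContDiff ℝ 1 f)
    (hfc : HasCompactSupport f) (hρ : Continuous ρ) (hρc : HasCompactSupport ρ)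
    (hc : Continuous c) (hv : Continuous v) (t : ℝ) :
    HasDerivAt (fun t : ℝ => ∫ y, ρ y * f (c y + t • v y))
      (∫ y, ρ y * fderiv ℝ f (c y + t • v y) (v y)) t := by
  have hfd : Continuous (fderiv ℝ f) := hf.continuous_fderiv (by norm_num)
  obtain ⟨C, hC⟩ := hfd.bounded_above_of_compact_support (hfc.fderiv (𝕜 := ℝ))
  have hfcont := hf.continuous
  refine (hasDerivAt_integral_of_dominated_loc_of_deriv_le (s := univ)
    (F := fun (t : ℝ) y => ρ y * f (c y + t • v y))
    (F' := fun (t : ℝ) y => ρ y * fderiv ℝ f (c y + t • v y) (v y))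
    (bound := fun y => ‖ρ y * (C * ‖v y‖)‖) univ_mem ?_ ?_ ?_ ?_ ?_ ?_).2
  · refine Eventually.of_forall fun t => ?_
    exact (by fun_prop : Continuous fun y => ρ y * f (c y + t • v y)).aestronglyMeasurable
  · exact (by fun_prop : Continuous fun y => ρ y * f (c y + t • v y)).integrable_of_hasCompactSupport
      hρc.mul_right
  · exact (by fun_prop : Continuous fun y =>
      ρ y * fderiv ℝ f (c y + t • v y) (v y)).aestronglyMeasurable
  · refine Eventually.of_forall fun y t _ => ?_
    have hC0 : 0 ≤ C := (norm_nonneg _).trans (hC 0)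
    rw [norm_mul, norm_mul]
    gcongr
    rw [Real.norm_of_nonneg (by positivity : 0 ≤ C * ‖v y‖)]
    exact ((fderiv ℝ f _).le_opNorm _).trans (by gcongr; exact hC _)
  · exact ((by fun_prop : Continuous fun y => ρ y * (C * ‖v y‖)).integrable_of_hasCompactSupport
      hρc.mul_right).norm
  · refine Eventually.of_forall fun y t _ => ?_
    have h1 : HasDerivAt (fun t : ℝ => c y + t • v y) (v y) t := by
      simpa using ((hasDerivAt_id t).smul_const (v y)).const_add (c y)
    exact (((hf.differentiable (by norm_num)).differentiableAt.hasFDerivAt).comp_hasDerivAt t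
      h1).const_mul (ρ y)

end generic

section kernel
variable {n : ℕ}

/-- The radial smooth kernel. -/
noncomputable def rho (y : Eu n) : ℝ := expNegInvGlue (1 - ‖y‖ ^ 2)

/-- A potential of the kernel: its gradient is `- rho y • y`. -/
noncomputable def etaK (y : Eu n) : ℝ := (∫ t in (‖y‖ ^ 2)..1, expNegInvGlue (1 - t)) / 2

lemma rho_contDiff : ContDiff ℝ ∞ (rho : Eu n → ℝ) := by
  unfold rho
  exact (expNegInvGlue.contDiff (n := ⊤)).comp (contDiff_const.sub (contDiff_norm_sq ℝ))

lemma rho_continuous : Continuous (rho : Eu n → ℝ) := rho_contDiff.continuous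

lemma rho_nonneg (y : Eu n) : 0 ≤ rho y := expNegInvGlue.nonneg _

lemma rho_eq_zero {y : Eu n} (hy : 1 ≤ ‖y‖) : rho y = 0 :=
  expNegInvGlue.zero_of_nonpos (by nlinarith)

lemma norm_lt_of_rho_ne {y : Eu n} (hy : rho y ≠ 0) : ‖y‖ < 1 := by
  by_contra h
  exact hy (rho_eq_zero (not_lt.1 h))

lemma rho_compact : HasCompactSupport (rho : Eu n → ℝ) := by
  refine HasCompactSupport.of_support_subset_isCompact (isCompact_closedBall (0 : Eu n) 1) ?_
  intro y hy
  simpa using (norm_lt_of_rho_ne hy).le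

lemma rho_neg (y : Eu n) : rho (-y) = rho y := by simp [rho]

lemma rho_int_pos : 0 < ∫ y : Eu n, rho y :=
  rho_continuous.integral_pos_of_hasCompactSupport_nonneg_nonzero rho_compact rho_nonneg
    (x := 0) (by
      have : 0 < rho (0 : Eu n) := expNegInvGlue.pos_of_pos (by simp)
      exact this.ne')

lemma etaK_hasFDerivAt (y : Eu n) :
    HasFDerivAt etaK (-(rho y) • (innerSL ℝ y : Eu n →L[ℝ] ℝ)) y := by
  have hc : Continuous fun t : ℝ => expNegInvGlue (1 - t) :=
    (expNegInvGlue.contDiff (n := 0)).continuous.comp (by fun_prop)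
  have h1 : HasDerivAt (fun s : ℝ => ∫ t in s..1, expNegInvGlue (1 - t))
      (-expNegInvGlue (1 - ‖y‖ ^ 2)) (‖y‖ ^ 2) :=
    intervalIntegral.integral_hasDerivAt_left (hc.intervalIntegrable _ _)
      (hc.stronglyMeasurableAtFilter _ _) hc.continuousAt
  have h2 : HasFDerivAt (fun y : Eu n => ‖y‖ ^ 2) (2 • (innerSL ℝ y : Eu n →L[ℝ] ℝ)) y :=
    (hasStrictFDerivAt_norm_sq y).hasFDerivAt
  have h3 := (h1.comp_hasFDerivAt y h2).mul_const (2⁻¹ : ℝ)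
  unfold etaK
  simp only [div_eq_mul_inv]
  convert! h3 using 1
  ext v
  simp [rho]
  ring

lemma etaK_contDiff : ContDiff ℝ 1 (etaK : Eu n → ℝ) := by
  rw [contDiff_one_iff_fderiv]
  refine ⟨fun y => (etaK_hasFDerivAt y).differentiableAt, ?_⟩
  have : fderiv ℝ (etaK : Eu n → ℝ) = fun y => -(rho y) • (innerSL ℝ y : Eu n →L[ℝ] ℝ) :=
    funext fun y => (etaK_hasFDerivAt y).fderiv
  rw [this]
  have := rho_continuous (n := n)
  fun_prop

lemma etaK_nonneg (y : Eu n) : 0 ≤ etaK y := by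
  unfold etaK
  by_cases h : ‖y‖ ^ 2 ≤ 1
  · have := intervalIntegral.integral_nonneg (μ := volume) h
      (fun t _ => expNegInvGlue.nonneg (1 - t))
    positivity
  · have : ∫ t in (‖y‖ ^ 2)..1, expNegInvGlue (1 - t) = ∫ t in (‖y‖ ^ 2)..1, (0 : ℝ) := by
      refine intervalIntegral.integral_congr fun t ht => ?_
      rw [uIcc_of_ge (not_le.1 h).le] at ht
      exact expNegInvGlue.zero_of_nonpos (by linarith [ht.1])
    rw [this]; simp

lemma etaK_eq_zero {y : Eu n} (h : 1 ≤ ‖y‖) : etaK y = 0 := by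
  unfold etaK
  have : ∫ t in (‖y‖ ^ 2)..1, expNegInvGlue (1 - t) = ∫ t in (‖y‖ ^ 2)..1, (0 : ℝ) := by
    refine intervalIntegral.integral_congr fun t ht => ?_
    rw [uIcc_of_ge (by nlinarith)] at ht
    exact expNegInvGlue.zero_of_nonpos (by linarith [ht.1])
  rw [this]; simp

/-- Weak harmonicity against nonnegative test functions. -/
def WeakHarm (U : Set (Eu n)) (w : Eu n → ℝ) : Prop :=
  ∀ η : Eu n → ℝ, ContDiff ℝ 1 η → (∀ x, 0 ≤ η x) → HasCompactSupport η → tsupport η ⊆ U →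
    ∫ x, ∑ i, fderiv ℝ η x (EuclideanSpace.single i 1) *
      fderiv ℝ w x (EuclideanSpace.single i 1) = 0

/-- Mean value property with kernel `rho`. -/
def MVP (U : Set (Eu n)) (w : Eu n → ℝ) : Prop :=
  ∀ x r, 0 < r → Metric.closedBall x r ⊆ U →
    ∫ y, rho y * w (x + r • y) = (∫ y : Eu n, rho y) * w x

lemma sum_single (L : Eu n →L[ℝ] ℝ) (y : Eu n) :
    ∑ i, y i * L (EuclideanSpace.single i 1) = L y := by
  have h : y = ∑ i, y i • (EuclideanSpace.single i (1 : ℝ) : Eu n) := by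
    ext j
    simp [Finset.sum_apply, Pi.single_apply]
  conv_rhs => rw [h]
  simp

lemma WeakHarm.radial {U : Set (Eu n)} {w : Eu n → ℝ} (h : WeakHarm U w) {x : Eu n} {r : ℝ}
    (hr : 0 < r) (hs : Metric.closedBall x r ⊆ U) :
    ∫ y, rho y * fderiv ℝ w (x + r • y) y = 0 := by
  have hsupp : tsupport (fun z => etaK (r⁻¹ • (z - x))) ⊆ Metric.closedBall x r := by
    refine closure_minimal ?_ Metric.isClosed_closedBall
    intro z hz
    by_contra hz'
    apply hz
    refine etaK_eq_zero ?_
    rw [Metric.mem_closedBall, not_le, dist_eq_norm] at hz'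
    rw [norm_smul, norm_inv, Real.norm_of_nonneg hr.le, inv_mul_eq_div, le_div_iff₀ hr]
    linarith
  have h1 := h (fun z => etaK (r⁻¹ • (z - x))) (etaK_contDiff.comp (by fun_prop))
    (fun z => etaK_nonneg _)
    (HasCompactSupport.of_support_subset_isCompact (isCompact_closedBall x r)
      ((subset_tsupport _).trans hsupp)) (hsupp.trans hs)
  have h2 : ∀ z, ∑ i, fderiv ℝ (fun z => etaK (r⁻¹ • (z - x))) z (EuclideanSpace.single i 1) *
      fderiv ℝ w z (EuclideanSpace.single i 1) =
      -r⁻¹ * (rho (r⁻¹ • (z - x)) * fderiv ℝ w z (r⁻¹ • (z - x))) := by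
    intro z
    have h3 : HasFDerivAt (fun z : Eu n => r⁻¹ • (z - x))
        (r⁻¹ • ContinuousLinearMap.id ℝ (Eu n)) z :=
      ((hasFDerivAt_id z).sub_const x).const_smul r⁻¹
    have h4 := ((etaK_hasFDerivAt (r⁻¹ • (z - x))).comp z h3).fderiv
    have h5 : (fun z => etaK (r⁻¹ • (z - x))) = etaK ∘ (fun z : Eu n => r⁻¹ • (z - x)) := rfl
    rw [h5, h4, ← sum_single (fderiv ℝ w z), Finset.mul_sum, Finset.mul_sum]
    refine Finset.sum_congr rfl fun i _ => ?_
    simp [EuclideanSpace.inner_single_right]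
    ring
  simp only [h2] at h1
  rw [integral_const_mul] at h1
  have h6 : ∫ z, rho (r⁻¹ • (z - x)) * fderiv ℝ w z (r⁻¹ • (z - x)) = 0 := by
    rcases mul_eq_zero.1 h1 with h | h
    · exact absurd h (by simp [hr.ne'])
    · exact h
  have h7 := Measure.integral_comp_smul (volume : Measure (Eu n))
    (fun z => rho (r⁻¹ • z) * fderiv ℝ w (x + z) (r⁻¹ • z)) r
  simp only [inv_smul_smul₀ hr.ne'] at h7
  rw [h7]
  have h8 := integral_add_left_eq_self (μ := (volume : Measure (Eu n)))
    (fun z => rho (r⁻¹ • (z - x)) * fderiv ℝ w z (r⁻¹ • (z - x))) x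
  simp only [add_sub_cancel_left] at h8
  rw [h8, h6, smul_zero]

lemma WeakHarm.mvp {U : Set (Eu n)} (hU : IsOpen U) {w : Eu n → ℝ} (h : WeakHarm U w)
    (hw : ContDiffOn ℝ 1 w U) : MVP U w := by
  intro x r hr hs
  obtain ⟨θ, δ, hδ, hθ, hθU, hθc, hθ1⟩ := exists_cutoff hU hr hs
  have hf : ContDiff ℝ 1 (fun x => θ x * w x) :=
    contDiff_cut hU (hθ.of_le (by exact_mod_cast le_top)) hθU hw
  have hF := fun t => hasDerivAt_param (c := fun _ => x) (v := fun y => y) hf hθc.mul_right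
    rho_continuous rho_compact continuous_const continuous_id t
  have hzero : ∀ t ∈ Ioo 0 r,
      ∫ y, rho y * fderiv ℝ (fun x => θ x * w x) (x + t • y) y = 0 := by
    intro t ht
    rw [← h.radial ht.1 ((Metric.closedBall_subset_closedBall ht.2.le).trans hs)]
    refine integral_congr_ae (Eventually.of_forall fun y => ?_)
    by_cases hy : rho y = 0
    · simp [hy]
    have hy1 := norm_lt_of_rho_ne hy
    have hmem : x + t • y ∈ Metric.ball x (r + δ) := by
      rw [mem_ball_iff_norm, add_sub_cancel_left, norm_smul, Real.norm_of_nonneg ht.1.le]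
      nlinarith [ht.1, ht.2, norm_nonneg y]
    have : (fun x => θ x * w x) =ᶠ[𝓝 (x + t • y)] w := by
      filter_upwards [Metric.isOpen_ball.mem_nhds hmem] with z hz
      rw [(hθ1 z (Metric.ball_subset_closedBall hz)).1, one_mul]
    simp only [this.fderiv_eq]
  obtain ⟨c, hc, hc'⟩ := exists_hasDerivAt_eq_slope _ _ hr
    (fun t _ => (hF t).continuousAt.continuousWithinAt) (fun t _ => hF t)
  rw [hzero c hc, eq_div_iff (by linarith), zero_mul] at hc'
  have e1 : ∫ y, rho y * w (x + r • y) = ∫ y, rho y * (θ (x + r • y) * w (x + r • y)) := by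
    refine integral_congr_ae (Eventually.of_forall fun y => ?_)
    by_cases hy : rho y = 0
    · simp [hy]
    have hy1 := norm_lt_of_rho_ne hy
    have hmem : x + r • y ∈ Metric.closedBall x (r + δ) := by
      rw [mem_closedBall_iff_norm, add_sub_cancel_left, norm_smul, Real.norm_of_nonneg hr.le]
      nlinarith [norm_nonneg y]
    simp [(hθ1 _ hmem).1]
  have e2 : θ x = 1 := (hθ1 x (Metric.mem_closedBall_self (by linarith))).1
  rw [e1, ← integral_mul_const]
  simp only [zero_smul, add_zero, e2, one_mul] at hc'
  linarith

end kernel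

section regularity
variable {n : ℕ}

lemma mem_ball_aux {x y : Eu n} {r : ℝ} (hr : 0 < r) (hy : ‖y‖ ≤ 1) :
    x + r • y ∈ Metric.closedBall x r := by
  rw [mem_closedBall_iff_norm, add_sub_cancel_left, norm_smul, Real.norm_of_nonneg hr.le]
  nlinarith [norm_nonneg y]

lemma MVP.smooth {U : Set (Eu n)} (hU : IsOpen U) {w : Eu n → ℝ} (h : MVP U w)
    (hw : ContinuousOn w U) : ContDiffOn ℝ ∞ w U := by
  intro x hx
  apply ContDiffAt.contDiffWithinAt
  obtain ⟨d, hd, hdU⟩ := Metric.nhds_basis_closedBall.mem_iff.1 (hU.mem_nhds hx)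
  obtain ⟨r, hr, rfl⟩ : ∃ r, 0 < r ∧ d = 2 * r := ⟨d / 2, by positivity, by ring⟩
  obtain ⟨θ, δ, hδ, hθ, hθU, hθc, hθ1⟩ := exists_cutoff hU hd hdU
  have hf : Continuous (fun x => θ x * w x) := continuous_cut hU hθ.continuous hθU hw
  have hfc : HasCompactSupport (fun x => θ x * w x) := hθc.mul_right
  have hg : ContDiff ℝ ∞ (fun v : Eu n => rho (r⁻¹ • v)) := rho_contDiff.comp (by fun_prop)
  have hgc : HasCompactSupport (fun v : Eu n => rho (r⁻¹ • v)) := by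
    refine HasCompactSupport.of_support_subset_isCompact (isCompact_closedBall (0 : Eu n) r) ?_
    intro y hy
    have := norm_lt_of_rho_ne hy
    rw [norm_smul, norm_inv, Real.norm_of_nonneg hr.le, inv_mul_eq_div, div_lt_one hr] at this
    simpa using this.le
  have hconv := hgc.contDiff_convolution_right (ContinuousLinearMap.mul ℝ ℝ) (n := ⊤)
    (hf.locallyIntegrable (μ := volume)) hg
  have hI := rho_int_pos (n := n)
  have key : w =ᶠ[𝓝 x] fun z => (∫ y : Eu n, rho y)⁻¹ * (|(r ^ Module.finrank ℝ (Eu n))⁻¹| *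
      (MeasureTheory.convolution (fun x => θ x * w x) (fun v : Eu n => rho (r⁻¹ • v))
        (ContinuousLinearMap.mul ℝ ℝ) volume z)) := by
    filter_upwards [Metric.ball_mem_nhds x hr] with z hz
    rw [Metric.mem_ball] at hz
    have hsub : Metric.closedBall z r ⊆ Metric.closedBall x (2 * r) :=
      Metric.closedBall_subset_closedBall' (by linarith)
    rw [eq_inv_mul_iff_mul_eq₀ hI.ne', ← h z r hr (hsub.trans hdU)]
    have e1 : ∫ y, rho y * w (z + r • y) = ∫ y, rho y * (θ (z + r • y) * w (z + r • y)) := by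
      refine integral_congr_ae (Eventually.of_forall fun y => ?_)
      by_cases hy : rho y = 0
      · simp [hy]
      have hmem := hsub (mem_ball_aux (x := z) hr (norm_lt_of_rho_ne hy).le)
      simp [(hθ1 _ (Metric.closedBall_subset_closedBall (by linarith) hmem)).1]
    rw [e1]
    have h7 := Measure.integral_comp_smul (volume : Measure (Eu n))
      (fun v => rho (r⁻¹ • v) * (θ (z + v) * w (z + v))) r
    simp only [inv_smul_smul₀ hr.ne'] at h7
    rw [h7, smul_eq_mul, MeasureTheory.convolution_def]
    congr 1
    have h8 := integral_add_left_eq_self (μ := (volume : Measure (Eu n)))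
      (fun v => rho (r⁻¹ • (v - z)) * (θ v * w v)) z
    simp only [add_sub_cancel_left] at h8
    rw [h8]
    refine integral_congr_ae (Eventually.of_forall fun v => ?_)
    simp only [ContinuousLinearMap.mul_apply']
    rw [← rho_neg, ← smul_neg, neg_sub, mul_comm]
  exact ((contDiff_const.mul (contDiff_const.mul hconv)).contDiffAt).congr_of_eventuallyEq key

lemma fderiv_cut {θ w : Eu n → ℝ} {x z : Eu n} {R R' : ℝ}
    (h1 : ∀ y ∈ Metric.closedBall x R', θ y = 1) (hR : R < R') (hz : z ∈ Metric.closedBall x R) :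
    fderiv ℝ (fun x => θ x * w x) z = fderiv ℝ w z := by
  apply Filter.EventuallyEq.fderiv_eq
  have : z ∈ Metric.ball x R' := Metric.closedBall_subset_ball hR hz
  filter_upwards [Metric.isOpen_ball.mem_nhds this] with y hy
  rw [h1 y (Metric.ball_subset_closedBall hy), one_mul]

lemma MVP.deriv {U : Set (Eu n)} (hU : IsOpen U) {w : Eu n → ℝ} (h : MVP U w)
    (hw : ContDiffOn ℝ 1 w U) (e : Eu n) : MVP U (fun x => fderiv ℝ w x e) := by
  intro x r hr hs
  obtain ⟨θ, δ, hδ, hθ, hθU, hθc, hθ1⟩ := exists_cutoff hU hr hs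
  have hf : ContDiff ℝ 1 (fun x => θ x * w x) :=
    contDiff_cut hU (hθ.of_le (by exact_mod_cast le_top)) hθU hw
  have hF := hasDerivAt_param (c := fun y => x + r • y) (v := fun y => e) hf hθc.mul_right
    rho_continuous rho_compact (by fun_prop) continuous_const 0
  have hxU : x ∈ U := hs (Metric.mem_closedBall_self hr.le)
  have hwx : DifferentiableAt ℝ w x :=
    (hw.contDiffAt (hU.mem_nhds hxU)).differentiableAt (by norm_num)
  have hline : HasDerivAt (fun t : ℝ => x + t • e) e 0 := by
    simpa using ((hasDerivAt_id (0 : ℝ)).smul_const e).const_add x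
  have hG : HasDerivAt (fun t : ℝ => (∫ y : Eu n, rho y) * w (x + t • e))
      ((∫ y : Eu n, rho y) * fderiv ℝ w x e) 0 := by
    have h0 : HasFDerivAt w (fderiv ℝ w x) (x + (0 : ℝ) • e) := by simpa using hwx.hasFDerivAt
    exact (h0.comp_hasDerivAt 0 hline).const_mul _
  have hev : (fun t : ℝ => (∫ y : Eu n, rho y) * w (x + t • e)) =ᶠ[𝓝 0]
      fun t : ℝ => ∫ y, rho y * (θ ((x + r • y) + t • e) * w ((x + r • y) + t • e)) := by
    have hmem : (fun t : ℝ => x + t • e) ⁻¹' Metric.ball x δ ∈ 𝓝 (0 : ℝ) := by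
      refine (by fun_prop : Continuous fun t : ℝ => x + t • e).continuousAt.preimage_mem_nhds ?_
      simpa using Metric.ball_mem_nhds x hδ
    filter_upwards [hmem] with t ht
    have ht' : dist (x + t • e) x < δ := ht
    have hsub : Metric.closedBall (x + t • e) r ⊆ Metric.closedBall x (r + δ) :=
      Metric.closedBall_subset_closedBall' (by linarith)
    rw [← h (x + t • e) r hr (fun z hz => (hθ1 z (hsub hz)).2)]
    refine integral_congr_ae (Eventually.of_forall fun y => ?_)
    by_cases hy : rho y = 0
    · simp [hy]
    have hmem := hsub (mem_ball_aux (x := x + t • e) hr (norm_lt_of_rho_ne hy).le)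
    have hcomm : x + r • y + t • e = x + t • e + r • y := by abel
    simp only [hcomm, (hθ1 _ hmem).1, one_mul]
  have hu := hF.unique (hG.congr_of_eventuallyEq hev.symm)
  rw [← hu]
  refine integral_congr_ae (Eventually.of_forall fun y => ?_)
  by_cases hy : rho y = 0
  · simp [hy]
  have hmem := (mem_ball_aux (x := x) hr (norm_lt_of_rho_ne hy).le)
  simp only [zero_smul, add_zero]
  rw [fderiv_cut (fun y hy => (hθ1 y hy).1) (by linarith : r < r + δ) hmem]

lemma MVP.bound {U : Set (Eu n)} (hU : IsOpen U) {w : Eu n → ℝ} (h : MVP U w)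
    (hw : ContDiffOn ℝ 1 w U) (e : Eu n) {x : Eu n} {r M : ℝ} (hr : 0 < r)
    (hs : Metric.closedBall x r ⊆ U) (hM : ∀ z ∈ Metric.closedBall x r, |w z| ≤ M) :
    |fderiv ℝ w x e| ≤
      (∫ y : Eu n, ‖fderiv ℝ rho y‖) / (∫ y : Eu n, rho y) * ‖e‖ / r * M := by
  have hI := rho_int_pos (n := n)
  obtain ⟨θ, δ, hδ, hθ, hθU, hθc, hθ1⟩ := exists_cutoff hU hr hs
  have hf : ContDiff ℝ 1 (fun x => θ x * w x) :=
    contDiff_cut hU (hθ.of_le (by exact_mod_cast le_top)) hθU hw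
  have hM0 : 0 ≤ M := (abs_nonneg _).trans (hM x (Metric.mem_closedBall_self hr.le))
  set f : Eu n → ℝ := fun x => θ x * w x with hfdef
  have h1 : (∫ y : Eu n, rho y) * fderiv ℝ w x e = ∫ y, rho y * fderiv ℝ f (x + r • y) e := by
    rw [← h.deriv hU hw e x r hr hs]
    refine integral_congr_ae (Eventually.of_forall fun y => ?_)
    by_cases hy : rho y = 0
    · simp [hy]
    have hmem := (mem_ball_aux (x := x) hr (norm_lt_of_rho_ne hy).le)
    simp only [hfdef]
    rw [fderiv_cut (fun y hy => (hθ1 y hy).1) (by linarith : r < r + δ) hmem]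
  have hF : ContDiff ℝ 1 (fun y => f (x + r • y)) := hf.comp (by fun_prop)
  have hFd : ∀ y, fderiv ℝ (fun y => f (x + r • y)) y e = r * fderiv ℝ f (x + r • y) e := by
    intro y
    have h3 : HasFDerivAt (fun y : Eu n => x + r • y)
        (r • ContinuousLinearMap.id ℝ (Eu n)) y :=
      ((hasFDerivAt_id y).const_smul r).const_add x
    have h4 := (((hf.differentiable (by norm_num)) (x + r • y)).hasFDerivAt.comp y h3).fderiv
    have h5 : (fun y => f (x + r • y)) = f ∘ (fun y : Eu n => x + r • y) := rfl
    rw [h5, h4]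
    simp
  have hrho1 : ContDiff ℝ 1 (rho : Eu n → ℝ) := rho_contDiff.of_le (by exact_mod_cast le_top)
  have hrd : Continuous (fderiv ℝ (rho : Eu n → ℝ)) := hrho1.continuous_fderiv (by norm_num)
  have hrdc : HasCompactSupport (fderiv ℝ (rho : Eu n → ℝ)) := rho_compact.fderiv (𝕜 := ℝ)
  have hrdce : HasCompactSupport (fun y => fderiv ℝ (rho : Eu n → ℝ) y e) :=
    hrdc.comp_left (g := fun L : Eu n →L[ℝ] ℝ => L e) (by simp)
  have hFcont := hF.continuous
  have hFdc : Continuous (fderiv ℝ (fun y => f (x + r • y))) :=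
    hF.continuous_fderiv (by norm_num)
  have hrc := rho_continuous (n := n)
  have h2 := integral_mul_fderiv_eq_neg_fderiv_mul_of_integrable (μ := (volume : Measure (Eu n)))
    (f := rho) (g := fun y => f (x + r • y)) (v := e)
    ((by fun_prop : Continuous fun y => fderiv ℝ rho y e * f (x + r • y)).integrable_of_hasCompactSupport
      hrdce.mul_right)
    ((by fun_prop : Continuous fun y => rho y * fderiv ℝ (fun y => f (x + r • y)) y e).integrable_of_hasCompactSupport
      rho_compact.mul_right)
    ((by fun_prop : Continuous fun y => rho y * f (x + r • y)).integrable_of_hasCompactSupport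
      rho_compact.mul_right)
    (fun y _ => (hrho1.differentiable (by norm_num)) y)
    (fun y _ => (hF.differentiable (by norm_num)) y)
  have h3 : r * ((∫ y : Eu n, rho y) * fderiv ℝ w x e) =
      -∫ y, fderiv ℝ rho y e * f (x + r • y) := by
    rw [h1, ← h2, ← integral_const_mul]
    refine integral_congr_ae (Eventually.of_forall fun y => ?_)
    simp only [hFd]
    ring
  have h4 : |∫ y, fderiv ℝ rho y e * f (x + r • y)| ≤ ∫ y : Eu n, ‖fderiv ℝ rho y‖ * (‖e‖ * M) := by
    rw [← Real.norm_eq_abs]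
    refine norm_integral_le_of_norm_le
      ((hrd.norm.integrable_of_hasCompactSupport hrdc.norm).mul_const _)
      (Eventually.of_forall fun y => ?_)
    by_cases hy : ‖y‖ ≤ 1
    · have hmem := mem_ball_aux (x := x) hr hy
      have : |f (x + r • y)| ≤ M := by
        simp only [hfdef]
        rw [(hθ1 _ (Metric.closedBall_subset_closedBall (by linarith) hmem)).1, one_mul]
        exact hM _ hmem
      rw [norm_mul, ← mul_assoc]
      gcongr
      · exact (fderiv ℝ rho y).le_opNorm e
      · exact this
    · have : fderiv ℝ rho y = 0 := by
        have h0 : (rho : Eu n → ℝ) =ᶠ[𝓝 y] fun _ => 0 := by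
          have : IsOpen {y : Eu n | 1 < ‖y‖} := isOpen_lt continuous_const continuous_norm
          filter_upwards [this.mem_nhds (not_le.1 hy)] with z hz
          exact rho_eq_zero (le_of_lt hz)
        rw [h0.fderiv_eq]; simp
      simp [this]
  rw [integral_mul_const] at h4
  have h5 : r * ((∫ y : Eu n, rho y) * |fderiv ℝ w x e|) ≤
      (∫ y : Eu n, ‖fderiv ℝ rho y‖) * (‖e‖ * M) := by
    calc _ = |r * ((∫ y : Eu n, rho y) * fderiv ℝ w x e)| := by
          rw [abs_mul, abs_mul, abs_of_pos hr, abs_of_pos hI]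
      _ ≤ _ := by rw [h3, abs_neg]; exact h4
  have : (∫ y : Eu n, ‖fderiv ℝ rho y‖) / (∫ y : Eu n, rho y) * ‖e‖ / r * M =
      ((∫ y : Eu n, ‖fderiv ℝ rho y‖) * (‖e‖ * M)) / (r * (∫ y : Eu n, rho y)) := by
    field_simp
  rw [this, le_div_iff₀ (by positivity)]
  linarith

end regularity

section uniqueContinuation
variable {n : ℕ}

/-- Directional derivative operator. -/
noncomputable def dirD (e : Eu n) (f : Eu n → ℝ) : Eu n → ℝ := fun x => fderiv ℝ f x e

/-- Smooth functions with the mean value property. -/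
def Good (U : Set (Eu n)) (w : Eu n → ℝ) : Prop := MVP U w ∧ ContDiffOn ℝ ∞ w U

lemma Good.c1 {U : Set (Eu n)} {w : Eu n → ℝ} (h : Good U w) : ContDiffOn ℝ 1 w U :=
  h.2.of_le (by exact_mod_cast le_top)

lemma Good.dirD {U : Set (Eu n)} (hU : IsOpen U) {w : Eu n → ℝ} (h : Good U w) (e : Eu n) :
    Good U (dirD e w) :=
  ⟨h.1.deriv hU h.c1 e,
    (h.2.fderiv_of_isOpen (m := ∞) hU (by norm_num)).clm_apply contDiffOn_const⟩

lemma Good.iter {U : Set (Eu n)} (hU : IsOpen U) {w : Eu n → ℝ} (h : Good U w) (e : Eu n)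
    (k : ℕ) : Good U ((_root_.dirD e)^[k] w) := by
  induction k with
  | zero => exact h
  | succ k ih => rw [Function.iterate_succ_apply']; exact ih.dirD hU e

/-- The constant in the gradient estimate. -/
noncomputable def gradC (n : ℕ) : ℝ :=
  (∫ y : Eu n, ‖fderiv ℝ rho y‖) / (∫ y : Eu n, rho y)

lemma gradC_nonneg : 0 ≤ gradC n :=
  div_nonneg (integral_nonneg fun _ => norm_nonneg _) rho_int_pos.le

lemma Good.iter_bound {U : Set (Eu n)} (hU : IsOpen U) {w : Eu n → ℝ} (h : Good U w) (e : Eu n)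
    {p : Eu n} {R M s : ℝ} (hs : 0 < s) (hR : Metric.closedBall p R ⊆ U)
    (hM : ∀ z ∈ Metric.closedBall p R, |w z| ≤ M) (k : ℕ) :
    ∀ z, dist z p + k * s ≤ R → |(_root_.dirD e)^[k] w z| ≤ (gradC n * ‖e‖ / s) ^ k * M := by
  induction k with
  | zero => intro z hz; simpa using hM z (by simpa using hz)
  | succ k ih =>
    intro z hz
    push_cast at hz
    have hk : (0 : ℝ) ≤ k * s := by positivity
    have hb := (h.iter hU e k).1.bound hU (h.iter hU e k).c1 e (x := z) (r := s)
      (M := (gradC n * ‖e‖ / s) ^ k * M) hs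
      ((Metric.closedBall_subset_closedBall' (by linarith)).trans hR) (fun y hy => ih y (by
        rw [Metric.mem_closedBall] at hy
        linarith [dist_triangle y z p]))
    rw [Function.iterate_succ_apply', pow_succ']
    rw [mul_assoc]
    exact hb

lemma taylor_aux (N : ℕ) : ∀ (g : ℕ → ℝ → ℝ) (A : ℝ),
    (∀ k, ∀ t ∈ Icc (0 : ℝ) 1, HasDerivAt (g k) (g (k + 1) t) t) → (∀ k, g k 0 = 0) →
    (∀ t ∈ Icc (0 : ℝ) 1, |g N t| ≤ A) →
    ∀ t ∈ Icc (0 : ℝ) 1, |g 0 t| ≤ A * t ^ N / (N.factorial : ℝ) := by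
  induction N with
  | zero => intro g A _ _ hA t ht; simpa using hA t ht
  | succ N ih =>
    intro g A hd h0 hA
    have h1 := ih (fun k => g (k + 1)) A (fun k => hd (k + 1)) (fun k => h0 (k + 1)) hA
    have hB : ∀ t : ℝ, HasDerivAt (fun t : ℝ => A * t ^ (N + 1) / ((N + 1).factorial : ℝ))
        (A * t ^ N / (N.factorial : ℝ)) t := by
      intro t
      have := ((hasDerivAt_pow (N + 1) t).const_mul A).div_const ((N + 1).factorial : ℝ)
      convert! this using 1
      rw [Nat.factorial_succ]
      push_cast
      have : (N.factorial : ℝ) ≠ 0 := by positivity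
      field_simp
    intro t ht
    refine image_norm_le_of_norm_deriv_right_le_deriv_boundary (f := g 0) (f' := g 1)
      (a := 0) (b := 1) (fun s hs => (hd 0 s hs).continuousAt.continuousWithinAt)
      (fun s hs => (hd 0 s (Ico_subset_Icc_self hs)).hasDerivWithinAt)
      (B := fun t : ℝ => A * t ^ (N + 1) / ((N + 1).factorial : ℝ))
      (B' := fun t : ℝ => A * t ^ N / (N.factorial : ℝ)) ?_ hB ?_ ht
    · simp [h0 0]
    · exact fun s hs => h1 s (Ico_subset_Icc_self hs)

lemma Good.local_uc {U : Set (Eu n)} (hU : IsOpen U) {w : Eu n → ℝ} (h : Good U w)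
    {p e : Eu n} {d : ℝ} (hd : 0 < d) (hp : Metric.closedBall p (2 * d) ⊆ U)
    (h0 : w =ᶠ[𝓝 p] fun _ => 0) (he : ‖e‖ ≤ d) (he' : gradC n * ‖e‖ * Real.exp 1 < d) :
    w (p + e) = 0 := by
  obtain ⟨M, hM⟩ := (isCompact_closedBall p (2 * d)).exists_bound_of_continuousOn
    (h.2.continuousOn.mono hp)
  have hM0 : 0 ≤ M := (norm_nonneg _).trans (hM p (Metric.mem_closedBall_self (by linarith)))
  have hC := gradC_nonneg (n := n)
  have hiter0 : ∀ k, ((_root_.dirD e)^[k] w) =ᶠ[𝓝 p] fun _ => 0 := by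
    intro k
    induction k with
    | zero => exact h0
    | succ k ih =>
      rw [Function.iterate_succ_apply']
      filter_upwards [ih.eventuallyEq_nhds] with y hy
      simp [_root_.dirD, hy.fderiv_eq]
  have hdist : ∀ t ∈ Icc (0 : ℝ) 1, dist (p + t • e) p ≤ d := by
    intro t ht
    rw [dist_eq_norm, add_sub_cancel_left, norm_smul, Real.norm_of_nonneg ht.1]
    nlinarith [ht.1, ht.2, norm_nonneg e]
  set q : ℝ := gradC n * ‖e‖ * Real.exp 1 / d with hq
  have hq0 : 0 ≤ q := by positivity
  have hq1 : q < 1 := by rw [hq, div_lt_one hd]; exact he'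
  have key : ∀ N : ℕ, |w (p + e)| ≤ q ^ (N + 1) * M := by
    intro N
    have hb := h.iter_bound hU e (p := p) (R := 2 * d) (M := M) (s := d / (N + 1 : ℕ))
      (by positivity) hp hM (N + 1)
    have ht := taylor_aux (N + 1) (fun k t => (_root_.dirD e)^[k] w (p + t • e))
      ((gradC n * ‖e‖ / (d / (N + 1 : ℕ))) ^ (N + 1) * M) ?_ ?_ ?_ 1 (by simp)
    · simp only [Function.iterate_zero, id, one_smul, one_pow, mul_one] at ht
      refine ht.trans ?_
      have hexp := Real.pow_div_factorial_le_exp (x := ((N + 1 : ℕ) : ℝ)) (by positivity) (N + 1)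
      have e1 : Real.exp ((N + 1 : ℕ) : ℝ) = Real.exp 1 ^ (N + 1) := by
        rw [← Real.exp_nat_mul, mul_one]
      rw [e1] at hexp
      calc (gradC n * ‖e‖ / (d / (N + 1 : ℕ))) ^ (N + 1) * M / ((N + 1).factorial : ℝ)
          = (gradC n * ‖e‖ / d) ^ (N + 1) *
            (((N + 1 : ℕ) : ℝ) ^ (N + 1) / ((N + 1).factorial : ℝ)) * M := by
            rw [← div_mul, mul_pow]; ring
        _ ≤ (gradC n * ‖e‖ / d) ^ (N + 1) * (Real.exp 1 ^ (N + 1)) * M := by gcongr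
        _ = q ^ (N + 1) * M := by rw [← mul_pow, hq]; ring
    · intro k t ht
      have hmem : p + t • e ∈ U := hp (by
        rw [Metric.mem_closedBall]; linarith [hdist t ht])
      have hdiff : DifferentiableAt ℝ ((_root_.dirD e)^[k] w) (p + t • e) :=
        ((h.iter hU e k).c1.contDiffAt (hU.mem_nhds hmem)).differentiableAt (by norm_num)
      have hline : HasDerivAt (fun t : ℝ => p + t • e) e t := by
        simpa using ((hasDerivAt_id t).smul_const e).const_add p
      rw [Function.iterate_succ_apply']
      exact hdiff.hasFDerivAt.comp_hasDerivAt t hline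
    · intro k
      simpa using (hiter0 k).self_of_nhds
    · intro t ht
      refine hb _ ?_
      have : ((N + 1 : ℕ) : ℝ) * (d / (N + 1 : ℕ)) = d := by field_simp
      rw [this]
      linarith [hdist t ht]
  have hlim : Tendsto (fun N : ℕ => q ^ (N + 1) * M) atTop (𝓝 0) := by
    have := ((tendsto_pow_atTop_nhds_zero_of_lt_one hq0 hq1).comp (tendsto_add_atTop_nat 1)).mul_const M
    simpa using this
  have := ge_of_tendsto' hlim key
  exact abs_eq_zero.1 (le_antisymm this (abs_nonneg _))

lemma Good.uc {U : Set (Eu n)} (hU : IsOpen U) (hc : IsPreconnected U) {w : Eu n → ℝ}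
    (h : Good U w) {p : Eu n} (hp : p ∈ U) (h0 : w =ᶠ[𝓝 p] fun _ => 0) :
    ∀ x ∈ U, w x = 0 := by
  have hsub : U ⊆ {x | w =ᶠ[𝓝 x] fun _ => 0} := by
    refine hc.subset_of_closure_inter_subset isOpen_setOfPred_eventually_nhds ⟨p, hp, h0⟩ ?_
    rintro x ⟨hxc, hxU⟩
    obtain ⟨d', hd', hdU⟩ := Metric.nhds_basis_closedBall.mem_iff.1 (hU.mem_nhds hxU)
    obtain ⟨d, hd, rfl⟩ : ∃ d, 0 < d ∧ d' = 3 * d := ⟨d' / 3, by positivity, by ring⟩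
    have hC := gradC_nonneg (n := n)
    obtain ⟨c, hc0, hcd, hcC⟩ : ∃ c > 0, c ≤ d ∧ gradC n * c * Real.exp 1 < d := by
      refine ⟨d / (1 + gradC n * Real.exp 1), by positivity, ?_, ?_⟩
      · exact div_le_self hd.le (by linarith [mul_nonneg hC (Real.exp_pos 1).le])
      · have : gradC n * (d / (1 + gradC n * Real.exp 1)) * Real.exp 1 =
          d * (gradC n * Real.exp 1) / (1 + gradC n * Real.exp 1) := by ring
        rw [this, div_lt_iff₀ (by positivity)]
        nlinarith
    obtain ⟨q, hq0, hq⟩ := Metric.mem_closure_iff.1 hxc c hc0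
    have hball : Metric.closedBall q (2 * d) ⊆ U :=
      (Metric.closedBall_subset_closedBall' (by rw [dist_comm]; linarith)).trans hdU
    have hx : Metric.ball q c ∈ 𝓝 x := Metric.isOpen_ball.mem_nhds hq
    show w =ᶠ[𝓝 x] fun _ => 0
    filter_upwards [hx] with y hy
    rw [mem_ball_iff_norm] at hy
    have := h.local_uc hU hd hball hq0 (e := y - q) (by linarith)
      (lt_of_le_of_lt (by gcongr) hcC)
    simpa using this
  exact fun x hx => (hsub hx).self_of_nhds

end uniqueContinuation

section weak
variable {n : ℕ}

/-- Coordinate vector. -/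
noncomputable abbrev ei (i : Fin n) : Eu n := EuclideanSpace.single i 1

lemma compact_fderiv_apply {η : Eu n → ℝ} (hc : HasCompactSupport η) (e : Eu n) :
    HasCompactSupport (fun x => fderiv ℝ η x e) :=
  (hc.fderiv (𝕜 := ℝ)).comp_left (g := fun L : Eu n →L[ℝ] ℝ => L e) (by simp)

lemma tsupport_fderiv_apply {η : Eu n → ℝ} (e : Eu n) :
    tsupport (fun x => fderiv ℝ η x e) ⊆ tsupport η := by
  refine (closure_mono ?_).trans (tsupport_fderiv_subset ℝ (f := η))
  intro x hx hx'
  exact hx (by simp [hx'])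

lemma weak_interior {Ω : Set (Eu n)} (hΩ : IsOpen Ω) {u : Eu n → ℝ} (hu : ContDiffOn ℝ 2 u Ω)
    (hh : ∀ x ∈ Ω, laplacian u x = 0) {η : Eu n → ℝ} (hη : ContDiff ℝ 1 η)
    (hc : HasCompactSupport η) (hs : tsupport η ⊆ Ω) :
    ∫ x, ∑ i, fderiv ℝ η x (ei i) * fderiv ℝ u x (ei i) = 0 := by
  have hηd : Continuous (fderiv ℝ η) := hη.continuous_fderiv (by norm_num)
  have hu1 : ContDiffOn ℝ 1 (fderiv ℝ u) Ω := hu.fderiv_of_isOpen hΩ (by norm_num)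
  have hui : ∀ i : Fin n, ContDiffOn ℝ 1 (fun x => fderiv ℝ u x (ei i)) Ω :=
    fun i => hu1.clm_apply contDiffOn_const
  have hcomm : ∀ f g : Eu n → ℝ, (fun x => f x * g x) = fun x => g x * f x :=
    fun f g => funext fun x => mul_comm _ _
  have hui2 : ∀ i : Fin n,
      ContinuousOn (fun x => fderiv ℝ (fun x => fderiv ℝ u x (ei i)) x (ei i)) Ω := by
    intro i
    exact ((hui i).continuousOn_fderiv_of_isOpen hΩ (by norm_num)).clm_apply continuousOn_const
  have hi1 : ∀ i : Fin n, Integrable (fun x => fderiv ℝ η x (ei i) * fderiv ℝ u x (ei i)) :=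
    fun i => integrable_cut hΩ (by fun_prop) (compact_fderiv_apply hc _)
      ((tsupport_fderiv_apply _).trans hs) (hui i).continuousOn
  have hi2 : ∀ i : Fin n, Integrable
      (fun x => η x * fderiv ℝ (fun x => fderiv ℝ u x (ei i)) x (ei i)) :=
    fun i => integrable_cut hΩ hη.continuous hc hs (hui2 i)
  have hibp : ∀ i : Fin n, ∫ x, fderiv ℝ η x (ei i) * fderiv ℝ u x (ei i) =
      -∫ x, η x * fderiv ℝ (fun x => fderiv ℝ u x (ei i)) x (ei i) := by
    intro i
    have := integral_mul_fderiv_eq_neg_fderiv_mul_of_integrable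
      (μ := (volume : Measure (Eu n))) (f := η) (g := fun x => fderiv ℝ u x (ei i)) (v := ei i)
      (hi1 i) (hi2 i) (integrable_cut hΩ hη.continuous hc hs (hui i).continuousOn)
      (fun y _ => (hη.differentiable (by norm_num)) y)
      (fun y hy => ((hui i).contDiffAt (hΩ.mem_nhds (hs hy))).differentiableAt (by norm_num))
    linarith
  rw [integral_finset_sum _ fun i _ => hi1 i, Finset.sum_congr rfl fun i _ => hibp i,
    Finset.sum_neg_distrib, ← integral_finset_sum _ fun i _ => hi2 i, neg_eq_zero]
  refine integral_eq_zero_of_ae (Eventually.of_forall fun x => ?_)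
  by_cases hx : x ∈ tsupport η
  · have hx' := hs hx
    have hl := hh x hx'
    unfold laplacian at hl
    simp only [Pi.zero_apply]
    rw [← Finset.mul_sum]
    have : ∑ i, fderiv ℝ (fun x => fderiv ℝ u x (ei i)) x (ei i) = 0 := by
      rw [← hl]
      refine Finset.sum_congr rfl fun i _ => ?_
      rw [iteratedFDeriv_two_apply]
      have hd : DifferentiableAt ℝ (fderiv ℝ u) x :=
        (hu1.contDiffAt (hΩ.mem_nhds hx')).differentiableAt (by norm_num)
      rw [fderiv_clm_apply hd (differentiableAt_const _)]
      simp
    rw [this, mul_zero]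
  · simp [image_eq_zero_of_notMem_tsupport hx]

lemma st_deriv_nonneg (t : ℝ) : 0 ≤ deriv Real.smoothTransition t :=
  Real.smoothTransition.monotone.deriv_nonneg

lemma st_deriv_ne {t : ℝ} (h : deriv Real.smoothTransition t ≠ 0) : 0 ≤ t ∧ t ≤ 1 := by
  constructor
  · by_contra ht
    apply h
    have : Real.smoothTransition =ᶠ[𝓝 t] fun _ => 0 := by
      filter_upwards [Iio_mem_nhds (not_le.1 ht)] with s hs
      exact Real.smoothTransition.zero_of_nonpos (le_of_lt hs)
    rw [this.deriv_eq]; simp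
  · by_contra ht
    apply h
    have : Real.smoothTransition =ᶠ[𝓝 t] fun _ => 1 := by
      filter_upwards [Ioi_mem_nhds (not_le.1 ht)] with s hs
      exact Real.smoothTransition.one_of_one_le (le_of_lt hs)
    rw [this.deriv_eq]; simp

/-- Cutoff adapted to `{φ > 0}`. -/
noncomputable def chi (φ : Eu n → ℝ) (ε : ℝ) (x : Eu n) : ℝ :=
  Real.smoothTransition (φ x / ε - 1)

lemma chi_contDiff {φ : Eu n → ℝ} (hφ : ContDiff ℝ 2 φ) (ε : ℝ) : ContDiff ℝ 1 (chi φ ε) := by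
  unfold chi
  have h1 : ContDiff ℝ 1 φ := hφ.of_le (by norm_num)
  exact (Real.smoothTransition.contDiff (n := 1)).comp
    ((h1.div_const ε).sub contDiff_const)

lemma chi_fderiv {φ : Eu n → ℝ} (hφ : ContDiff ℝ 2 φ) (ε : ℝ) (x v : Eu n) :
    fderiv ℝ (chi φ ε) x v =
      deriv Real.smoothTransition (φ x / ε - 1) / ε * fderiv ℝ φ x v := by
  have h1 : HasFDerivAt φ (fderiv ℝ φ x) x :=
    ((hφ.differentiable (by norm_num)) x).hasFDerivAt
  have h2 : HasFDerivAt (fun x => φ x / ε - 1) (ε⁻¹ • fderiv ℝ φ x) x := by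
    simpa only [div_eq_mul_inv] using (h1.mul_const ε⁻¹).sub_const 1
  have h3 : HasDerivAt Real.smoothTransition (deriv Real.smoothTransition (φ x / ε - 1))
      (φ x / ε - 1) :=
    ((Real.smoothTransition.contDiff (n := 1)).differentiable (by norm_num) _).hasDerivAt
  have h4 : HasFDerivAt (chi φ ε)
      (deriv Real.smoothTransition (φ x / ε - 1) • (ε⁻¹ • fderiv ℝ φ x)) x :=
    h3.comp_hasFDerivAt x h2
  rw [h4.fderiv]
  simp
  ring

lemma weak_global {φ : Eu n → ℝ} (hφ : ContDiff ℝ 2 φ)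
    (hφg : ∀ x, φ x = 0 → ∃ i, fderiv ℝ φ x (ei i) ≠ 0)
    {U : Set (Eu n)} (hU : IsOpen U) {w : Eu n → ℝ} (hw : ContDiffOn ℝ 1 w U)
    (hw2 : ContDiffOn ℝ 2 w {x | 0 < φ x}) (hh : ∀ x, 0 < φ x → laplacian w x = 0)
    (hw0 : ∀ x ∈ U, φ x ≤ 0 → fderiv ℝ w x = 0) : WeakHarm U w := by
  intro η hη hη0 hc hs
  have hΩ : IsOpen {x | 0 < φ x} := isOpen_lt continuous_const hφ.continuous
  have hηd : Continuous (fderiv ℝ η) := hη.continuous_fderiv (by norm_num)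
  have hηc : Continuous η := hη.continuous
  have hφc : Continuous φ := hφ.continuous
  have hφd : Continuous (fderiv ℝ φ) := hφ.continuous_fderiv (by norm_num)
  have hwd : ContinuousOn (fderiv ℝ w) U := hw.continuousOn_fderiv_of_isOpen hU (by norm_num)
  have hwi : ∀ i : Fin n, ContinuousOn (fun x => fderiv ℝ w x (ei i)) U :=
    fun i => hwd.clm_apply continuousOn_const
  have hφ1 : ContDiff ℝ 1 (fderiv ℝ φ) := hφ.fderiv_right (by norm_num)
  have hφi : ∀ i : Fin n, ContDiff ℝ 1 (fun x => fderiv ℝ φ x (ei i)) :=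
    fun i => hφ1.clm_apply contDiff_const
  have hchic : ∀ ε, Continuous (chi φ ε) := fun ε => (chi_contDiff hφ ε).continuous
  have hchid : ∀ ε, Continuous (fderiv ℝ (chi φ ε)) :=
    fun ε => (chi_contDiff hφ ε).continuous_fderiv (by norm_num)
  set a : Eu n → ℝ := fun x => ∑ i, fderiv ℝ η x (ei i) * fderiv ℝ w x (ei i) with ha
  set b : Eu n → ℝ := fun x => ∑ i, fderiv ℝ φ x (ei i) * fderiv ℝ w x (ei i) with hb
  set s : Eu n → ℝ := fun x => ∑ i, fderiv ℝ φ x (ei i) * fderiv ℝ φ x (ei i) with hsd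
  set D : ℝ → Eu n → ℝ := fun ε x => deriv Real.smoothTransition (φ x / ε - 1) / ε with hD
  set C : ℝ := ∫ x, |∑ i, fderiv ℝ (fun x => η x * fderiv ℝ φ x (ei i)) x (ei i)| with hC
  have hstd : Continuous (deriv Real.smoothTransition) :=
    (Real.smoothTransition.contDiff (n := 1)).continuous_deriv (by norm_num)
  have hDc : ∀ ε, Continuous (D ε) := fun ε => by
    simp only [hD]; fun_prop
  have hbc : ContinuousOn b U :=
    continuousOn_finset_sum _ fun i _ => (by fun_prop : Continuous fun x =>
      fderiv ℝ φ x (ei i)).continuousOn.mul (hwi i)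
  have hsc : Continuous s := by simp only [hsd]; fun_prop
  have hai : Integrable a := by
    refine integrable_finset_sum _ fun i _ => ?_
    exact integrable_cut hU (by fun_prop) (compact_fderiv_apply hc _)
      ((tsupport_fderiv_apply _).trans hs) (hwi i)
  have hai' : ∀ ε, Integrable fun x => chi φ ε x * a x := by
    intro ε
    simp only [ha, Finset.mul_sum]
    refine integrable_finset_sum _ fun i _ => ?_
    have h1 : Integrable (fun x => fderiv ℝ η x (ei i) * (fderiv ℝ w x (ei i) * chi φ ε x)) :=
      integrable_cut hU (by fun_prop) (compact_fderiv_apply hc _)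
      ((tsupport_fderiv_apply _).trans hs) ((hwi i).mul (hchic ε).continuousOn)
    refine h1.congr (Eventually.of_forall fun x => ?_)
    simp only; ring
  have hbi : ∀ ε, Integrable fun x => η x * (D ε x * b x) := fun ε =>
    integrable_cut hU hηc hc hs ((hDc ε).continuousOn.mul hbc)
  have hsi : ∀ ε, Integrable fun x => η x * (D ε x * s x) := fun ε =>
    integrable_cut hU hηc hc hs ((hDc ε).mul hsc).continuousOn
  -- the identity from the interior
  have hid : ∀ ε, 0 < ε → ∫ x, chi φ ε x * a x = -∫ x, η x * (D ε x * b x) := by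
    intro ε hε
    have hsup : tsupport (fun x => η x * chi φ ε x) ⊆ {x | 0 < φ x} := by
      have h1 : tsupport (fun x => η x * chi φ ε x) ⊆ {x | ε ≤ φ x} := by
        refine closure_minimal ?_ (isClosed_le continuous_const hφc)
        intro x hx
        by_contra hx'
        apply hx
        have : chi φ ε x = 0 := by
          apply Real.smoothTransition.zero_of_nonpos
          have : φ x / ε ≤ 1 := (div_le_one hε).2 (not_le.1 hx').le
          linarith
        simp [this]
      exact h1.trans fun x hx => lt_of_lt_of_le hε hx
    have h1 := weak_interior hΩ hw2 hh (hη.mul (chi_contDiff hφ ε)) hc.mul_right hsup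
    have h2 : ∀ x, ∑ i, fderiv ℝ (fun x => η x * chi φ ε x) x (ei i) * fderiv ℝ w x (ei i) =
        chi φ ε x * a x + η x * (D ε x * b x) := by
      intro x
      simp only [ha, hb, Finset.mul_sum]
      rw [← Finset.sum_add_distrib]
      refine Finset.sum_congr rfl fun i _ => ?_
      rw [fderiv_fun_mul ((hη.differentiable (by norm_num)) x)
        (((chi_contDiff hφ ε).differentiable (by norm_num)) x)]
      simp only [ContinuousLinearMap.add_apply, ContinuousLinearMap.smul_apply, smul_eq_mul,
        chi_fderiv hφ, hD]
      ring
    simp only [h2] at h1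
    rw [integral_add (hai' ε) (hbi ε)] at h1
    linarith
  -- uniform bound on the layer
  have hlay : ∀ ε, ∫ x, η x * (D ε x * s x) ≤ C := by
    intro ε
    have hηφ : ∀ i : Fin n, ContDiff ℝ 1 (fun x => η x * fderiv ℝ φ x (ei i)) :=
      fun i => hη.mul (hφi i)
    have hηφd : ∀ i : Fin n, Continuous (fderiv ℝ (fun x => η x * fderiv ℝ φ x (ei i))) :=
      fun i => (hηφ i).continuous_fderiv (by norm_num)
    have hηφc : ∀ i : Fin n, HasCompactSupport (fun x => η x * fderiv ℝ φ x (ei i)) :=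
      fun i => hc.mul_right
    have j1 : ∀ i : Fin n, Integrable (fun x =>
        fderiv ℝ (fun x => η x * fderiv ℝ φ x (ei i)) x (ei i) * chi φ ε x) := fun i => by
      have := hηφd i
      have := hchic ε
      exact (by fun_prop : Continuous (fun x =>
        fderiv ℝ (fun x => η x * fderiv ℝ φ x (ei i)) x (ei i) * chi φ ε x)).integrable_of_hasCompactSupport
        (compact_fderiv_apply (hηφc i) _).mul_right
    have j2 : ∀ i : Fin n, Integrable (fun x =>
        (η x * fderiv ℝ φ x (ei i)) * fderiv ℝ (chi φ ε) x (ei i)) := fun i => by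
      have := hchid ε
      exact (by fun_prop : Continuous (fun x =>
        (η x * fderiv ℝ φ x (ei i)) * fderiv ℝ (chi φ ε) x (ei i))).integrable_of_hasCompactSupport
        (hηφc i).mul_right
    have j3 : ∀ i : Fin n, Integrable (fun x =>
        (η x * fderiv ℝ φ x (ei i)) * chi φ ε x) := fun i => by
      have := hchic ε
      exact (by fun_prop : Continuous (fun x =>
        (η x * fderiv ℝ φ x (ei i)) * chi φ ε x)).integrable_of_hasCompactSupport
        (hηφc i).mul_right
    have hibp : ∀ i : Fin n, ∫ x, (η x * fderiv ℝ φ x (ei i)) * fderiv ℝ (chi φ ε) x (ei i) =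
        -∫ x, fderiv ℝ (fun x => η x * fderiv ℝ φ x (ei i)) x (ei i) * chi φ ε x := fun i =>
      integral_mul_fderiv_eq_neg_fderiv_mul_of_integrable (j1 i) (j2 i) (j3 i)
        (fun y _ => ((hηφ i).differentiable (by norm_num)) y)
        (fun y _ => ((chi_contDiff hφ ε).differentiable (by norm_num)) y)
    have e1 : ∫ x, η x * (D ε x * s x) =
        ∑ i, ∫ x, (η x * fderiv ℝ φ x (ei i)) * fderiv ℝ (chi φ ε) x (ei i) := by
      rw [← integral_finset_sum _ fun i _ => j2 i]
      refine integral_congr_ae (Eventually.of_forall fun x => ?_)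
      simp only [hsd, Finset.mul_sum]
      refine Finset.sum_congr rfl fun i _ => ?_
      simp only [chi_fderiv hφ, hD]
      ring
    rw [e1, Finset.sum_congr rfl fun i _ => hibp i, Finset.sum_neg_distrib,
      ← integral_finset_sum _ fun i _ => j1 i]
    refine (neg_le_abs _).trans ?_
    rw [← Real.norm_eq_abs]
    have hInt : Integrable (fun x =>
        |∑ i, fderiv ℝ (fun x => η x * fderiv ℝ φ x (ei i)) x (ei i)|) := by
      refine Integrable.abs (integrable_finset_sum _ fun i _ => ?_)
      have := hηφd i
      exact (by fun_prop : Continuous (fun x =>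
        fderiv ℝ (fun x => η x * fderiv ℝ φ x (ei i)) x (ei i))).integrable_of_hasCompactSupport
        (compact_fderiv_apply (hηφc i) _)
    refine norm_integral_le_of_norm_le hInt (Eventually.of_forall fun x => ?_)
    rw [← Finset.sum_mul, norm_mul, Real.norm_eq_abs, Real.norm_eq_abs]
    refine mul_le_of_le_one_right (abs_nonneg _) ?_
    rw [abs_of_nonneg (show 0 ≤ chi φ ε x from Real.smoothTransition.nonneg _)]
    exact Real.smoothTransition.le_one _
  -- smallness
  have hsmall : ∀ δ, 0 < δ → ∀ᶠ ε in 𝓝[>] (0 : ℝ), |∫ x, chi φ ε x * a x| ≤ δ * C := by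
    intro δ hδ
    have hcl : IsClosed (tsupport η ∩ (fun x => |b x| - δ * s x) ⁻¹' Ici 0) := by
      refine ContinuousOn.preimage_isClosed_of_isClosed ?_ (isClosed_tsupport η) isClosed_Ici
      exact (hbc.mono hs).abs.sub (hsc.const_smul δ).continuousOn
    have hK : IsCompact ((tsupport η ∩ (fun x => |b x| - δ * s x) ⁻¹' Ici 0) ∩ {x | 0 ≤ φ x}) :=
      hc.isCompact.of_isClosed_subset (hcl.inter (isClosed_le continuous_const hφc))
        fun x hx => hx.1.1
    obtain ⟨c, hc0, hcK⟩ := hK.exists_forall_le' (f := φ) hφc.continuousOn (a := 0) (by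
      rintro x ⟨⟨hx1, hx2⟩, hx3⟩
      refine lt_of_le_of_ne hx3 fun h0 => ?_
      have hb0 : b x = 0 := by
        simp only [hb, hw0 x (hs hx1) h0.symm.le]
        simp
      obtain ⟨i, hi⟩ := hφg x h0.symm
      have hs0 : 0 < s x := by
        simp only [hsd]
        exact Finset.sum_pos' (fun j _ => mul_self_nonneg _)
          ⟨i, Finset.mem_univ i, mul_self_pos.2 hi⟩
      simp only [mem_preimage, mem_Ici, hb0, abs_zero] at hx2
      nlinarith)
    have hmem : Ioo (0 : ℝ) (c / 2) ∈ 𝓝[>] (0 : ℝ) := Ioo_mem_nhdsGT (by positivity)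
    filter_upwards [hmem] with ε hε
    rw [hid ε hε.1, abs_neg, ← Real.norm_eq_abs]
    refine (norm_integral_le_of_norm_le ((hsi ε).const_mul δ)
      (Eventually.of_forall fun x => ?_)).trans ?_
    · have hD0 : 0 ≤ D ε x := div_nonneg (st_deriv_nonneg _) hε.1.le
      rw [norm_mul, norm_mul, Real.norm_of_nonneg (hη0 x), Real.norm_of_nonneg hD0,
        Real.norm_eq_abs]
      by_cases hx : x ∈ tsupport η
      · by_cases hDx : deriv Real.smoothTransition (φ x / ε - 1) = 0
        · simp [hD, hDx]
        · obtain ⟨h1, h2⟩ := st_deriv_ne hDx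
          have h1' : ε ≤ φ x := by
            rw [sub_nonneg, one_le_div hε.1] at h1; exact h1
          have h2' : φ x ≤ 2 * ε := by
            rw [← div_le_iff₀ hε.1]; linarith
          have hlt : |b x| < δ * s x := by
            by_contra hcon
            have := hcK x ⟨⟨hx, by simpa using not_lt.1 hcon⟩, hε.1.le.trans h1'⟩
            linarith [hε.2]
          calc η x * (D ε x * |b x|) ≤ η x * (D ε x * (δ * s x)) := by
                have := hη0 x
                gcongr
            _ = _ := by ring
      · simp [image_eq_zero_of_notMem_tsupport hx]
    · rw [integral_const_mul]
      exact mul_le_mul_of_nonneg_left (hlay ε) hδ.le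
  -- convergence
  have hlim : Tendsto (fun ε => ∫ x, chi φ ε x * a x) (𝓝[>] (0 : ℝ)) (𝓝 (∫ x, a x)) := by
    refine tendsto_integral_filter_of_dominated_convergence (fun x => ‖a x‖)
      (Eventually.of_forall fun ε => (hai' ε).aestronglyMeasurable)
      (Eventually.of_forall fun ε => Eventually.of_forall fun x => ?_) hai.norm
      (Eventually.of_forall fun x => ?_)
    · rw [norm_mul]
      refine mul_le_of_le_one_left (norm_nonneg _) ?_
      rw [Real.norm_of_nonneg (show 0 ≤ chi φ ε x from Real.smoothTransition.nonneg _)]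
      exact Real.smoothTransition.le_one _
    · by_cases hx : 0 < φ x
      · refine tendsto_const_nhds.congr' ?_
        have hmem : Ioo (0 : ℝ) (φ x / 2) ∈ 𝓝[>] (0 : ℝ) := Ioo_mem_nhdsGT (by positivity)
        filter_upwards [hmem] with ε hε
        have : chi φ ε x = 1 := by
          apply Real.smoothTransition.one_of_one_le
          have : 2 ≤ φ x / ε := by rw [le_div_iff₀ hε.1]; linarith [hε.2]
          linarith
        rw [this, one_mul]
      · have : a x = 0 := by
          by_cases hxη : x ∈ tsupport η
          · simp only [ha, hw0 x (hs hxη) (not_lt.1 hx)]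
            simp
          · simp only [ha, fderiv_of_notMem_tsupport (𝕜 := ℝ) hxη]
            simp
        simp [this]
  have hC0 : 0 ≤ C := integral_nonneg fun _ => abs_nonneg _
  have hfin : ∀ δ, 0 < δ → |∫ x, a x| ≤ δ * C := fun δ hδ =>
    le_of_tendsto hlim.abs (hsmall δ hδ)
  have : |∫ x, a x| ≤ 0 := by
    refine le_of_forall_pos_le_add fun δ hδ => ?_
    have h1 := hfin (δ / (C + 1)) (by positivity)
    refine h1.trans ?_
    rw [zero_add, div_mul_eq_mul_div, div_le_iff₀ (by positivity)]
    nlinarith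
  exact abs_eq_zero.1 (le_antisymm this (abs_nonneg _))

end weak

end helpers

/-- Weak unique continuation principle for Steklov eigenfunctions
(Theorem 3.3, reformulated without Sobolev spaces). -/
theorem weak_unique_continuation
    {n : ℕ} (hn : 2 ≤ n)
    (Ω : Set (EuclideanSpace ℝ (Fin n)))
    (hΩopen : IsOpen Ω) (hΩconn : IsConnected Ω)
    (hΩbdd : Bornology.IsBounded Ω)
    (φ : EuclideanSpace ℝ (Fin n) → ℝ)
    (hφ : ContDiff ℝ 2 φ)
    (hΩφ : Ω = {x | 0 < φ x})
    (hφgrad : ∀ x, φ x = 0 → 1 ≤ ‖gradient φ x‖)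
    (B : Set (EuclideanSpace ℝ (Fin n)))
    (hB : IsOpen B) (hBfr : (B ∩ frontier Ω).Nonempty)
    (u : EuclideanSpace ℝ (Fin n) → ℝ)
    (hu : ContDiffOn ℝ 2 u Ω)
    (hharm : ∀ x ∈ Ω, laplacian u x = 0)
    (w : EuclideanSpace ℝ (Fin n) → ℝ)
    (hw : ∀ x ∈ Ω, w x = u x) (hw0 : ∀ x ∉ Ω, w x = 0)
    (hwC1 : ContDiffOn ℝ 1 w (Ω ∪ B)) :
    ∀ x ∈ Ω, u x = 0 := by
  have hfd : ∀ x, φ x = 0 → fderiv ℝ φ x ≠ 0 := by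
    intro x hx h0
    have := hφgrad x hx
    rw [gradient, h0, map_zero, norm_zero] at this
    linarith
  have hcoord : ∀ x, φ x = 0 → ∃ i, fderiv ℝ φ x (ei i) ≠ 0 := by
    intro x hx
    by_contra hcon
    push Not at hcon
    apply hfd x hx
    ext v
    rw [← sum_single (fderiv ℝ φ x) v]
    exact Finset.sum_eq_zero fun i _ => by rw [hcon i, mul_zero]
  have hneg : IsOpen {x | φ x < 0} := isOpen_lt hφ.continuous continuous_const
  have hclos : ∀ x, φ x ≤ 0 → x ∈ closure {x | φ x < 0} := by
    intro x hx
    rcases hx.lt_or_eq with h | h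
    · exact subset_closure h
    · by_contra hcon
      apply hfd x h
      have : IsLocalMin φ x := by
        filter_upwards [isClosed_closure.isOpen_compl.mem_nhds hcon] with y hy
        rw [h]
        by_contra hy'
        exact hy (subset_closure (not_le.1 hy'))
      exact this.fderiv_eq_zero
  have hweq0 : ∀ x, φ x < 0 → w =ᶠ[nhds x] fun _ => 0 := by
    intro x hx
    filter_upwards [hneg.mem_nhds hx] with y hy
    refine hw0 y ?_
    rw [hΩφ]
    exact not_lt.2 (le_of_lt hy)
  have hUo : IsOpen (Ω ∪ B) := hΩopen.union hB
  have hwd : ContinuousOn (fderiv ℝ w) (Ω ∪ B) :=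
    hwC1.continuousOn_fderiv_of_isOpen hUo (by norm_num)
  have hder0 : ∀ x ∈ Ω ∪ B, φ x ≤ 0 → fderiv ℝ w x = 0 := by
    intro x hxU hx
    have hmc := hclos x hx
    have hcat := (hwd.continuousAt (hUo.mem_nhds hxU)).continuousWithinAt (s := {x | φ x < 0})
    have := hcat.mem_closure_image hmc
    have hsub : fderiv ℝ w '' {x | φ x < 0} ⊆ {0} := by
      rintro _ ⟨y, hy, rfl⟩
      rw [(hweq0 y hy).fderiv_eq]
      simp
    simpa using closure_mono hsub this
  have hwu : ∀ x ∈ Ω, w =ᶠ[nhds x] u := by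
    intro x hx
    filter_upwards [hΩopen.mem_nhds hx] with y hy
    exact hw y hy
  have hW : WeakHarm (Ω ∪ B) w := by
    refine weak_global hφ hcoord hUo hwC1 ?_ ?_ hder0
    · rw [← hΩφ]
      exact hu.congr hw
    · intro x hx
      have hx' : x ∈ Ω := by rw [hΩφ]; exact hx
      rw [← hharm x hx']
      unfold laplacian
      rw [((hwu x hx').iteratedFDeriv ℝ 2).self_of_nhds]
  have hmvp := hW.mvp hUo hwC1
  obtain ⟨x₀, hx₀B, hx₀f⟩ := hBfr
  obtain ⟨d, hd, hdB⟩ := Metric.isOpen_iff.1 hB x₀ hx₀B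
  have hVU : Ω ∪ Metric.ball x₀ d ⊆ Ω ∪ B := union_subset_union_right _ hdB
  have hVo : IsOpen (Ω ∪ Metric.ball x₀ d) := hΩopen.union Metric.isOpen_ball
  have hx₀c : x₀ ∈ closure Ω := frontier_subset_closure hx₀f
  have hVc : IsPreconnected (Ω ∪ Metric.ball x₀ d) := by
    obtain ⟨y, hy, hyd⟩ := Metric.mem_closure_iff.1 hx₀c d hd
    refine IsPreconnected.union y hy ?_ hΩconn.isPreconnected
      (convex_ball x₀ d).isPreconnected
    rw [Metric.mem_ball, dist_comm]
    exact hyd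
  have hmvpV : MVP (Ω ∪ Metric.ball x₀ d) w :=
    fun x r hr hs => hmvp x r hr (hs.trans hVU)
  have hgood : Good (Ω ∪ Metric.ball x₀ d) w :=
    ⟨hmvpV, hmvpV.smooth hVo (hwC1.continuousOn.mono hVU)⟩
  have hx₀φ : φ x₀ ≤ 0 := by
    have : x₀ ∉ Ω := by
      rw [hΩopen.frontier_eq] at hx₀f
      exact hx₀f.2
    rw [hΩφ] at this
    exact not_lt.1 this
  obtain ⟨p, hp, hpd⟩ := Metric.mem_closure_iff.1 (hclos x₀ hx₀φ) d hd
  have hpV : p ∈ Ω ∪ Metric.ball x₀ d := by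
    right
    rw [Metric.mem_ball, dist_comm]
    exact hpd
  intro x hx
  rw [← hw x hx]
  exact hgood.uc hVo hVc hpV (hweq0 p hp) x (Or.inl hx)
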